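/- arXiv:2011.05845 — 4 statements merged into one kernel-verified Lean document; each statement's English description precedes it below -/
import Mathlib

section
/- Let A, B be n×n real symmetric matrices with A ⪰ B ⪰ 0 whose ranges coincide (the column space of A equals the column space of B). If A† and B† are the Moore–Penrose pseudoinverses of A and B respectively, then B† ⪰ A†. -/
open Matrix

/-- `X` is the Moore–Penrose pseudoinverse of `A`. -/
def IsMoorePenrose {p q : ℕ} (A : Matrix (Fin p) (Fin q) ℝ) (X : Matrix (Fin q) (Fin p) ℝ) :
    Prop :=
  (X * A)ᵀ = X * A ∧ (A * X)ᵀ = A * X ∧ X * A * X = X ∧ A * X * A = A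

/-!
In a star ring, let `x = a†` and `y = b†` with `a`, `b` self-adjoint. By uniqueness of the
Moore–Penrose inverse, `x` and `y` are self-adjoint and commute with `a` and `b`. If `b` is a left
divisor of `a`, the projection `b * y = y * b` fixes `a`, hence also `x = a * (x * x)`, so

  `y - x = x * (a - b) * x + (y - x) * b * (y - x)`,

which is nonnegative when `0 ≤ b ≤ a`. For matrices, left divisibility `B ∣ A` is the inclusion
of the range of `A` in the range of `B`.
-/

/-- `x` is the Moore–Penrose inverse of the element `a`. This is `IsMoorePenrose`
for a multiplication with a star operation; it covers square matrices but not rectangular ones. -/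
structure IsMoorePenroseInverse {R : Type*} [Mul R] [Star R] (a x : R) : Prop where
  isSelfAdjoint_inverse_mul : IsSelfAdjoint (x * a)
  isSelfAdjoint_mul_inverse : IsSelfAdjoint (a * x)
  inverse_mul_mul_inverse : x * a * x = x
  mul_inverse_mul : a * x * a = a

namespace IsMoorePenroseInverse

theorem mul_inverse_mul_of_dvd {R : Type*} [Semigroup R] [Star R] {a c x : R}
    (hx : IsMoorePenroseInverse a x) (hac : a ∣ c) : a * x * c = c := by
  obtain ⟨d, rfl⟩ := hac
  rw [← mul_assoc, hx.mul_inverse_mul]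

section StarMul

variable {R : Type*} [Semigroup R] [StarMul R] {a x y : R}

theorem mul_inverse_eq_mul_inverse (hx : IsMoorePenroseInverse a x)
    (hy : IsMoorePenroseInverse a y) : a * x = a * y :=
  calc
    a * x = star (a * x) := hx.isSelfAdjoint_mul_inverse.star_eq.symm
    _ = star (a * y * (a * x)) := by rw [← mul_assoc, hy.mul_inverse_mul]
    _ = a * x * (a * y) := by
      rw [star_mul, hx.isSelfAdjoint_mul_inverse.star_eq, hy.isSelfAdjoint_mul_inverse.star_eq]
    _ = a * y := by rw [← mul_assoc, hx.mul_inverse_mul]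

protected theorem star (hx : IsMoorePenroseInverse a x) :
    IsMoorePenroseInverse (star a) (star x) where
  isSelfAdjoint_inverse_mul := by
    simpa only [star_mul] using IsSelfAdjoint.star_iff.mpr hx.isSelfAdjoint_mul_inverse
  isSelfAdjoint_mul_inverse := by
    simpa only [star_mul] using IsSelfAdjoint.star_iff.mpr hx.isSelfAdjoint_inverse_mul
  inverse_mul_mul_inverse := by
    simpa only [star_mul, mul_assoc] using congrArg star hx.inverse_mul_mul_inverse
  mul_inverse_mul := by
    simpa only [star_mul, mul_assoc] using congrArg star hx.mul_inverse_mul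

theorem unique (hx : IsMoorePenroseInverse a x) (hy : IsMoorePenroseInverse a y) : x = y := by
  have inverse_mul_eq : x * a = y * a :=
    star_injective (by simpa only [star_mul] using hx.star.mul_inverse_eq_mul_inverse hy.star)
  calc
    x = x * (a * x) := by rw [← mul_assoc, hx.inverse_mul_mul_inverse]
    _ = y * a * y := by rw [hx.mul_inverse_eq_mul_inverse hy, ← mul_assoc, inverse_mul_eq]
    _ = y := hy.inverse_mul_mul_inverse

theorem isSelfAdjoint (hx : IsMoorePenroseInverse a x) (ha : IsSelfAdjoint a) :
    IsSelfAdjoint x :=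
  (ha.star_eq ▸ hx.star).unique hx

theorem commute (hx : IsMoorePenroseInverse a x) (ha : IsSelfAdjoint a) : Commute a x :=
  (ha.commute_iff (hx.isSelfAdjoint ha)).mpr hx.isSelfAdjoint_mul_inverse

theorem dvd_inverse (hx : IsMoorePenroseInverse a x) (ha : IsSelfAdjoint a) : a ∣ x :=
  ⟨x * x, by rw [← mul_assoc, (hx.commute ha).eq, hx.inverse_mul_mul_inverse]⟩

end StarMul

theorem sub_eq_conjugate_add_conjugate {R : Type*} [NonUnitalRing R] [StarRing R] {a b x y : R}
    (hx : IsMoorePenroseInverse a x) (hy : IsMoorePenroseInverse b y)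
    (ha : IsSelfAdjoint a) (hb : IsSelfAdjoint b) (hdvd : b ∣ a) :
    y - x = x * (a - b) * x + (y - x) * b * (y - x) := by
  have left_fixed : y * b * x = x := by
    rw [← (hy.commute hb).eq, hy.mul_inverse_mul_of_dvd (hdvd.trans (hx.dvd_inverse ha))]
  have right_fixed : x * b * y = x := by
    simpa only [star_mul, (hx.isSelfAdjoint ha).star_eq, (hy.isSelfAdjoint hb).star_eq,
      hb.star_eq, ← mul_assoc] using congrArg star left_fixed
  simp only [mul_sub, sub_mul, hx.inverse_mul_mul_inverse, hy.inverse_mul_mul_inverse,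
    left_fixed, right_fixed]
  abel

end IsMoorePenroseInverse

theorem IsMoorePenrose.isMoorePenroseInverse {n : ℕ} {A X : Matrix (Fin n) (Fin n) ℝ}
    (h : IsMoorePenrose A X) : IsMoorePenroseInverse A X :=
  ⟨h.1, h.2.1, h.2.2.1, h.2.2.2⟩

theorem exists_eq_mul_of_range_mulVecLin_le {R l m n : Type*} [CommSemiring R] [Fintype m]
    [Fintype n] {A : Matrix l n R} {B : Matrix l m R}
    (h : LinearMap.range A.mulVecLin ≤ LinearMap.range B.mulVecLin) :
    ∃ C : Matrix m n R, A = B * C := by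
  classical
  have exists_column (j : n) : ∃ w, B *ᵥ w = A.col j := by
    simpa using h ⟨Pi.single j 1, rfl⟩
  choose w hw using exists_column
  exact ⟨(of w)ᵀ, ext_col fun j ↦ (hw j).symm⟩

theorem pseudoinverse_antitone_general {R : Type*} [NonUnitalRing R] [PartialOrder R] [StarRing R]
    [StarOrderedRing R] {a b x y : R} (hb : 0 ≤ b) (hba : b ≤ a) (hdvd : b ∣ a)
    (hx : IsMoorePenroseInverse a x) (hy : IsMoorePenroseInverse b y) : x ≤ y := by
  have ha := IsSelfAdjoint.of_nonneg (hb.trans hba)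
  have hb' := IsSelfAdjoint.of_nonneg hb
  have hx' := hx.isSelfAdjoint ha
  have hy' := hy.isSelfAdjoint hb'
  rw [← sub_nonneg, hx.sub_eq_conjugate_add_conjugate hy ha hb' hdvd]
  exact add_nonneg (hx'.conjugate_nonneg (sub_nonneg.mpr hba)) ((hy'.sub hx').conjugate_nonneg hb)

/-- If `A ⪰ B ⪰ 0` are symmetric matrices with the same range, then their Moore–Penrose
pseudoinverses satisfy `B† ⪰ A†`. -/
theorem pseudoinverse_antitone (n : ℕ) (A B Adag Bdag : Matrix (Fin n) (Fin n) ℝ)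
    (hB : B.PosSemidef) (hAB : (A - B).PosSemidef)
    (hran : LinearMap.range A.mulVecLin = LinearMap.range B.mulVecLin)
    (hAdag : IsMoorePenrose A Adag) (hBdag : IsMoorePenrose B Bdag) :
    (Bdag - Adag).PosSemidef := by
  open scoped MatrixOrder in
  exact Matrix.le_iff.mp <| pseudoinverse_antitone_general hB.nonneg (Matrix.le_iff.mpr hAB)
    (exists_eq_mul_of_range_mulVecLin_le hran.le) hAdag.isMoorePenroseInverse
    hBdag.isMoorePenroseInverse
end

section
/- Let Λ₁ ∈ S^k₊ and Λ₂ ∈ S^m₊ with Moore–Penrose pseudoinverses Λ₁†, Λ₂†. Let X ∈ Sⁿ₊ with Moore–Penrose pseudoinverse X†, and let Y ∈ ℝ^{n×k}, Z ∈ ℝ^{n×m} satisfy range(Yᵀ) ⊆ range(Λ₁), range(Zᵀ) ⊆ range(Λ₂), range(Y) ⊆ range(X) and range(Z) ⊆ range(X). Then the real number (1/2)·(YΛ₁†)·(X†(YΛ₁†)) + (1/2)·(ZΛ₂†)·(X†(ZΛ₂†)) is the least upper bound of the set {X·A + Y·B + Z·C : (A,B,C) ∈ O_Λ}, and this supremum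 is attained by some element of O_Λ. -/
/-!
For `X ⪰ 0` and fixed `B`, `C`, the term `X·A` is largest when the constraint on `A` is tight, which
leaves `Y·B - ½ X·(B LᵀL Bᵀ)` to be maximised over `B`, and a term of the same shape over `C`;
here `L` is a factor of the weight, with `L = Λ` when the weight is `Λ²` and `Λ` is symmetric.

The range conditions give `Y = W L` and `W = X V`, where `W = Y L†` and `V = X† W`. In terms of
`U = B Lᵀ` the quantity to maximise is `W·U - ½ X·(U Uᵀ)`, and completing the square turns it into
`½ W·V - ½ X·((U - V)(U - V)ᵀ)`. The maximum `½ W·V` is attained because `V = B Lᵀ` is solvable: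
the rows of `Y L†` lie in the column space of `L`, since `L L†` is symmetric.
-/

open Matrix

/-- The Frobenius inner product `A · B = trace (Aᵀ * B)` of two real matrices. -/
noncomputable def frobInner {p q : ℕ} (A B : Matrix (Fin p) (Fin q) ℝ) : ℝ :=
  (Aᵀ * B).trace

/-- The constraint set
`O_Λ = {(A,B,C) ∈ Sⁿ × ℝ^{n×k} × ℝ^{n×m} : A + ½·B Λ₁² Bᵀ + ½·C Λ₂² Cᵀ ⪯ 0}`. -/
def OLam (n k m : ℕ) (Λ₁ : Matrix (Fin k) (Fin k) ℝ) (Λ₂ : Matrix (Fin m) (Fin m) ℝ) :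
    Set (Matrix (Fin n) (Fin n) ℝ × Matrix (Fin n) (Fin k) ℝ × Matrix (Fin n) (Fin m) ℝ) :=
  {p | p.1.IsSymm ∧
    (-(p.1 + (1 / 2 : ℝ) • (p.2.1 * Λ₁ ^ 2 * p.2.1ᵀ) +
        (1 / 2 : ℝ) • (p.2.2 * Λ₂ ^ 2 * p.2.2ᵀ))).PosSemidef}

section GeneralizedInverse

variable {R ι κ ρ : Type*} [CommSemiring R] [Fintype ι] [Fintype κ] [Fintype ρ]

/-- `G` is a least-squares generalized inverse (a `{1,3}`-inverse) of `A`: the first and third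
Penrose conditions hold. Over `ℝ` this makes `A * G` the orthogonal projection onto the range of
`A`. -/
structure IsLeastSquaresInverse (A : Matrix ι κ R) (G : Matrix κ ι R) : Prop where
  mul_mul_self : A * G * A = A
  isSymm_mul : (A * G).IsSymm

lemma mul_mul_eq_of_range_le {A : Matrix ι κ R} {G : Matrix κ ι R} {B : Matrix ι ρ R}
    (hG : A * G * A = A)
    (hB : LinearMap.range B.mulVecLin ≤ LinearMap.range A.mulVecLin) :
    A * (G * B) = B := by
  refine Matrix.ext_iff_mulVec.mpr fun v ↦ ?_
  obtain ⟨w, hw : A *ᵥ w = B *ᵥ v⟩ := hB ⟨v, rfl⟩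
  rw [← mulVec_mulVec, ← mulVec_mulVec, ← hw, mulVec_mulVec, mulVec_mulVec, hG]

lemma mul_mul_eq_of_range_transpose_le {L : Matrix ρ κ R} {G : Matrix κ ρ R} {Y : Matrix ι κ R}
    (hG : L * G * L = L)
    (hY : LinearMap.range Yᵀ.mulVecLin ≤ LinearMap.range Lᵀ.mulVecLin) :
    Y * G * L = Y := by
  have hGt : Lᵀ * Gᵀ * Lᵀ = Lᵀ := by
    rw [← transpose_mul, ← transpose_mul, ← Matrix.mul_assoc, hG]
  have h := congrArg transpose (mul_mul_eq_of_range_le hGt hY)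
  simpa only [transpose_mul, transpose_transpose] using h

lemma IsLeastSquaresInverse.mul_mul_transpose_mul_transpose {L : Matrix ρ κ R}
    {G : Matrix κ ρ R} {Y : Matrix ι κ R} (hG : IsLeastSquaresInverse L G)
    (hY : LinearMap.range Yᵀ.mulVecLin ≤ LinearMap.range Lᵀ.mulVecLin) :
    Y * G * Gᵀ * Lᵀ = Y * G := by
  rw [Matrix.mul_assoc, ← transpose_mul, hG.isSymm_mul.eq, ← Matrix.mul_assoc,
    mul_mul_eq_of_range_transpose_le hG.mul_mul_self hY]

end GeneralizedInverse

section CompletingTheSquare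

variable {R ι κ ρ : Type*} [CommRing R] [Fintype ι] [Fintype κ] [Fintype ρ] {X : Matrix ι ι R}

lemma two_mul_trace_sub_trace_eq (hX : X.IsSymm) (U V : Matrix ι ρ R) :
    2 * ((X * V)ᵀ * U).trace - (Uᵀ * X * U).trace =
      ((X * V)ᵀ * V).trace - ((U - V)ᵀ * X * (U - V)).trace := by
  have hUV : (Uᵀ * X * V).trace = (Vᵀ * X * U).trace := by
    rw [← trace_transpose]
    simp only [transpose_mul, transpose_transpose, hX.eq, Matrix.mul_assoc]
  simp only [transpose_mul, transpose_sub, hX.eq, Matrix.sub_mul, Matrix.mul_sub, trace_sub, hUV]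
  ring

lemma two_mul_trace_mul_transpose_sub_trace_eq (hX : X.IsSymm) (L : Matrix ρ κ R)
    (B : Matrix ι κ R) (V : Matrix ι ρ R) :
    2 * ((X * V * L)ᵀ * B).trace - (X * (B * (Lᵀ * L) * Bᵀ)).trace =
      ((X * V)ᵀ * V).trace - ((B * Lᵀ - V)ᵀ * X * (B * Lᵀ - V)).trace := by
  have linear : ((X * V)ᵀ * (B * Lᵀ)).trace = ((X * V * L)ᵀ * B).trace := by
    rw [← Matrix.mul_assoc, trace_mul_comm, ← Matrix.mul_assoc, ← transpose_mul]
  have quadratic : ((B * Lᵀ)ᵀ * X * (B * Lᵀ)).trace = (X * (B * (Lᵀ * L) * Bᵀ)).trace := by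
    rw [Matrix.mul_assoc, trace_mul_comm]
    simp only [transpose_mul, transpose_transpose, Matrix.mul_assoc]
  rw [← linear, ← quadratic, two_mul_trace_sub_trace_eq hX]

end CompletingTheSquare

open scoped MatrixOrder ComplexOrder in
lemma trace_mul_nonneg_of_posSemidef {𝕜 ι : Type*} [RCLike 𝕜] [Fintype ι] {X P : Matrix ι ι 𝕜}
    (hX : X.PosSemidef) (hP : P.PosSemidef) : 0 ≤ (X * P).trace := by
  classical
  obtain ⟨R, rfl⟩ := CStarAlgebra.nonneg_iff_eq_star_mul_self.mp hP.nonneg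
  rw [star_eq_conjTranspose, ← Matrix.mul_assoc, trace_mul_cycle]
  simpa only [Matrix.mul_assoc] using (hX.mul_mul_conjTranspose_same R).trace_nonneg

section Maximization

variable {ι κ κ₁ κ₂ ρ ρ₁ ρ₂ : Type*} [Fintype ι] [Fintype κ] [Fintype κ₁] [Fintype κ₂]
  [Fintype ρ] [Fintype ρ₁] [Fintype ρ₂]

lemma isGreatest_trace_mul_of_add_nonpos {X P : Matrix ι ι ℝ} (hX : X.PosSemidef)
    (hP : P.IsSymm) :
    IsGreatest ((fun A ↦ (X * A).trace) '' {A | A.IsSymm ∧ (-(A + P)).PosSemidef})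
      (-(X * P).trace) := by
  refine ⟨⟨-P, ⟨hP.neg, ?_⟩, by simp⟩, ?_⟩
  · simpa using PosSemidef.zero
  · rintro _ ⟨A, ⟨-, hA⟩, rfl⟩
    have h := trace_mul_nonneg_of_posSemidef hX hA
    rw [Matrix.mul_neg, Matrix.mul_add, trace_neg, trace_add] at h
    linarith

lemma isGreatest_range_trace_sub_half_trace {X Xd : Matrix ι ι ℝ} {L : Matrix ρ κ ℝ}
    {Ld : Matrix κ ρ ℝ} {Y : Matrix ι κ ℝ} (hX : X.PosSemidef) (hXd : X * Xd * X = X)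
    (hLd : IsLeastSquaresInverse L Ld)
    (hYL : LinearMap.range Yᵀ.mulVecLin ≤ LinearMap.range Lᵀ.mulVecLin)
    (hYX : LinearMap.range Y.mulVecLin ≤ LinearMap.range X.mulVecLin) :
    IsGreatest
      (Set.range fun B : Matrix ι κ ℝ ↦
        (Yᵀ * B).trace - 1 / 2 * (X * (B * (Lᵀ * L) * Bᵀ)).trace)
      (1 / 2 * ((Y * Ld)ᵀ * (Xd * (Y * Ld))).trace) := by
  have hXs : X.IsSymm := isHermitian_iff_isSymm.mp hX.isHermitian
  set V := Xd * (Y * Ld) with hV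
  have hXV : X * V = Y * Ld := by
    rw [hV, ← Matrix.mul_assoc Xd, ← Matrix.mul_assoc, mul_mul_eq_of_range_le hXd hYX]
  have hYLd : Y * Ld * L = Y := mul_mul_eq_of_range_transpose_le hLd.mul_mul_self hYL
  have square (B : Matrix ι κ ℝ) := two_mul_trace_mul_transpose_sub_trace_eq hXs L B V
  simp only [hXV, hYLd] at square
  refine ⟨⟨Xd * (Y * Ld * Ldᵀ), ?_⟩, ?_⟩
  · have hB : Xd * (Y * Ld * Ldᵀ) * Lᵀ = V := by
      rw [Matrix.mul_assoc, hLd.mul_mul_transpose_mul_transpose hYL]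
    have h := square (Xd * (Y * Ld * Ldᵀ))
    rw [hB, sub_self, Matrix.mul_zero, trace_zero] at h
    linarith
  · rintro _ ⟨B, rfl⟩
    have h := (hX.conjTranspose_mul_mul_same (B * Lᵀ - V)).trace_nonneg
    rw [conjTranspose_eq_transpose_of_trivial] at h
    linarith [square B]

/-- The constraint set `A + ½ B S₁ Bᵀ + ½ C S₂ Cᵀ ⪯ 0` with `A` symmetric, for arbitrary weights
`S₁` and `S₂`; `OLam` is the case `Sᵢ = Λᵢ ^ 2`. -/
def weightedConstraintSet (S₁ : Matrix κ₁ κ₁ ℝ) (S₂ : Matrix κ₂ κ₂ ℝ) :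
    Set (Matrix ι ι ℝ × Matrix ι κ₁ ℝ × Matrix ι κ₂ ℝ) :=
  {p | p.1.IsSymm ∧
    (-(p.1 + (1 / 2 : ℝ) • (p.2.1 * S₁ * p.2.1ᵀ) +
        (1 / 2 : ℝ) • (p.2.2 * S₂ * p.2.2ᵀ))).PosSemidef}

theorem weighted_action_sup_attained_general
    {L₁ : Matrix ρ₁ κ₁ ℝ} {L₁d : Matrix κ₁ ρ₁ ℝ} {L₂ : Matrix ρ₂ κ₂ ℝ} {L₂d : Matrix κ₂ ρ₂ ℝ}
    {X Xd : Matrix ι ι ℝ} {Y : Matrix ι κ₁ ℝ} {Z : Matrix ι κ₂ ℝ}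
    (hL₁d : IsLeastSquaresInverse L₁ L₁d) (hL₂d : IsLeastSquaresInverse L₂ L₂d)
    (hX : X.PosSemidef) (hXd : X * Xd * X = X)
    (hYL : LinearMap.range Yᵀ.mulVecLin ≤ LinearMap.range L₁ᵀ.mulVecLin)
    (hZL : LinearMap.range Zᵀ.mulVecLin ≤ LinearMap.range L₂ᵀ.mulVecLin)
    (hYX : LinearMap.range Y.mulVecLin ≤ LinearMap.range X.mulVecLin)
    (hZX : LinearMap.range Z.mulVecLin ≤ LinearMap.range X.mulVecLin) :
    IsGreatest {r : ℝ | ∃ p ∈ weightedConstraintSet (L₁ᵀ * L₁) (L₂ᵀ * L₂),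
        r = (Xᵀ * p.1).trace + (Yᵀ * p.2.1).trace + (Zᵀ * p.2.2).trace}
      (1 / 2 * ((Y * L₁d)ᵀ * (Xd * (Y * L₁d))).trace +
        1 / 2 * ((Z * L₂d)ᵀ * (Xd * (Z * L₂d))).trace) := by
  have hXt : Xᵀ = X := isHermitian_iff_isSymm.mp hX.isHermitian
  have maxY := isGreatest_range_trace_sub_half_trace hX hXd hL₁d hYL hYX
  have maxZ := isGreatest_range_trace_sub_half_trace hX hXd hL₂d hZL hZX
  have maxA (B : Matrix ι κ₁ ℝ) (C : Matrix ι κ₂ ℝ) := isGreatest_trace_mul_of_add_nonpos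
    (P := (1 / 2 : ℝ) • (B * (L₁ᵀ * L₁) * Bᵀ) + (1 / 2 : ℝ) • (C * (L₂ᵀ * L₂) * Cᵀ)) hX
    (by simp only [IsSymm, transpose_add, transpose_smul, transpose_mul, transpose_transpose,
      Matrix.mul_assoc])
  simp only [← add_assoc, Matrix.mul_add, Matrix.mul_smul, trace_add, trace_smul,
    smul_eq_mul] at maxA
  constructor
  · obtain ⟨B, hB⟩ := maxY.1
    obtain ⟨C, hC⟩ := maxZ.1
    obtain ⟨A, hA, hXA⟩ := (maxA B C).1
    refine ⟨(A, B, C), hA, ?_⟩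
    simp only [hXt] at hXA ⊢
    linarith
  · rintro _ ⟨⟨A, B, C⟩, hA, rfl⟩
    have hXA := (maxA B C).2 ⟨A, hA, rfl⟩
    simp only [hXt] at hXA ⊢
    linarith [maxY.2 ⟨B, rfl⟩, maxZ.2 ⟨C, rfl⟩]

end Maximization

/-- Under the range compatibility conditions, the value
`½ (YΛ₁†)·(X†(YΛ₁†)) + ½ (ZΛ₂†)·(X†(ZΛ₂†))` is the least upper bound of
`{X·A + Y·B + Z·C : (A,B,C) ∈ O_Λ}`, and the supremum is attained. -/
theorem weighted_action_sup_attained (n k m : ℕ)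
    (Λ₁ Λ₁d : Matrix (Fin k) (Fin k) ℝ) (Λ₂ Λ₂d : Matrix (Fin m) (Fin m) ℝ)
    (X Xd : Matrix (Fin n) (Fin n) ℝ)
    (Y : Matrix (Fin n) (Fin k) ℝ) (Z : Matrix (Fin n) (Fin m) ℝ)
    (hΛ₁ : Λ₁.PosSemidef) (hΛ₂ : Λ₂.PosSemidef) (hX : X.PosSemidef)
    (hΛ₁d : IsMoorePenrose Λ₁ Λ₁d) (hΛ₂d : IsMoorePenrose Λ₂ Λ₂d)
    (hXd : IsMoorePenrose X Xd)
    (hY1 : LinearMap.range (Yᵀ).mulVecLin ≤ LinearMap.range Λ₁.mulVecLin)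
    (hZ1 : LinearMap.range (Zᵀ).mulVecLin ≤ LinearMap.range Λ₂.mulVecLin)
    (hY2 : LinearMap.range Y.mulVecLin ≤ LinearMap.range X.mulVecLin)
    (hZ2 : LinearMap.range Z.mulVecLin ≤ LinearMap.range X.mulVecLin) :
    IsLUB {r : ℝ | ∃ p ∈ OLam n k m Λ₁ Λ₂,
        r = frobInner X p.1 + frobInner Y p.2.1 + frobInner Z p.2.2}
      ((1 / 2) * frobInner (Y * Λ₁d) (Xd * (Y * Λ₁d)) +
        (1 / 2) * frobInner (Z * Λ₂d) (Xd * (Z * Λ₂d))) ∧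
    ((1 / 2) * frobInner (Y * Λ₁d) (Xd * (Y * Λ₁d)) +
        (1 / 2) * frobInner (Z * Λ₂d) (Xd * (Z * Λ₂d))) ∈
      {r : ℝ | ∃ p ∈ OLam n k m Λ₁ Λ₂,
        r = frobInner X p.1 + frobInner Y p.2.1 + frobInner Z p.2.2} := by
  have hΛ₁t : Λ₁ᵀ = Λ₁ := isHermitian_iff_isSymm.mp hΛ₁.isHermitian
  have hΛ₂t : Λ₂ᵀ = Λ₂ := isHermitian_iff_isSymm.mp hΛ₂.isHermitian
  have h := weighted_action_sup_attained_general ⟨hΛ₁d.2.2.2, hΛ₁d.2.1⟩ ⟨hΛ₂d.2.2.2, hΛ₂d.2.1⟩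
    hX hXd.2.2.2 (hΛ₁t.symm ▸ hY1) (hΛ₂t.symm ▸ hZ1) hY2 hZ2
  rw [hΛ₁t, hΛ₂t, ← sq, ← sq] at h
  exact ⟨h.isLUB, h.1⟩
end

section
/- Let Λ₁ ∈ S^k₊, Λ₂ ∈ S^m₊, X ∈ Sⁿ, Y ∈ ℝ^{n×k} and Z ∈ ℝ^{n×m}. If X is not positive semidefinite, or range(Yᵀ) ⊄ range(Λ₁), or range(Zᵀ) ⊄ range(Λ₂), or range(Y) ∪ range(Z) ⊄ range(X), then the set of real numbers {X·A + Y·B + Z·C : (A,B,C) ∈ O_Λ} is not bounded above. -/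
/-!
Testing with the rank-one matrices `A = -s • u uᵀ`, `B = u wᵀ` and `C = 0`, which are admissible as
soon as `wᵀ Λ₁² w ≤ 2 s`, shows that every number `uᵀ Y w - s (uᵀ X u)` is a value of the objective.
If `uᵀ X u < 0`, take `w = 0` and let `s → ∞`. If `uᵀ Y w ≠ 0` and `(wᵀ Λ₁² w) (uᵀ X u) = 0`,
rescaling `w` by `t` and taking `s = t² (wᵀ Λ₁² w) / 2` leaves only the linear term `t (uᵀ Y w)`. A
failing range inclusion provides such a pair, since a vector outside the range of a matrix is
separated from it by a vector of the left kernel. The matrices `C` and `B` play symmetric roles.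
-/

open Matrix

lemma exists_vecMul_eq_zero_of_notMem_range {K ι κ : Type*} [Field K] [Fintype ι] [Fintype κ]
    {M : Matrix ι κ K} {y : ι → K} (hy : y ∉ LinearMap.range M.mulVecLin) :
    ∃ w : ι → K, w ᵥ* M = 0 ∧ w ⬝ᵥ y ≠ 0 := by
  classical
  obtain ⟨f, hfy, hf⟩ := Submodule.exists_le_ker_of_notMem hy
  obtain ⟨w, rfl⟩ := (dotProductEquiv K ι).surjective f
  refine ⟨w, dotProduct_eq_zero _ fun x => ?_, hfy⟩
  rw [← dotProduct_mulVec]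
  exact hf ⟨x, rfl⟩

lemma exists_vecMul_eq_zero_of_not_range_le {K ι κ ν : Type*} [Field K] [Fintype ι] [Fintype κ]
    [Fintype ν] {M : Matrix ι κ K} {N : Matrix ι ν K}
    (h : ¬ LinearMap.range N.mulVecLin ≤ LinearMap.range M.mulVecLin) :
    ∃ (w : ι → K) (u : ν → K), w ᵥ* M = 0 ∧ w ⬝ᵥ N *ᵥ u ≠ 0 := by
  obtain ⟨_, ⟨u, rfl⟩, hu⟩ := SetLike.not_le_iff_exists.mp h
  obtain ⟨w, hwM, hwu⟩ := exists_vecMul_eq_zero_of_notMem_range hu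
  exact ⟨w, u, hwM, hwu⟩

lemma exists_dotProduct_mulVec_neg_of_not_posSemidef {ι : Type*} [Fintype ι] {X : Matrix ι ι ℝ}
    (hX : X.IsSymm) (h : ¬ X.PosSemidef) : ∃ v : ι → ℝ, v ⬝ᵥ X *ᵥ v < 0 := by
  contrapose! h
  exact .of_dotProduct_mulVec_nonneg (isHermitian_iff_isSymm.mpr hX) h

lemma not_bddAbove_of_forall_nonneg_mul_mem {K : Type*} [Field K] [LinearOrder K]
    [IsStrictOrderedRing K] {S : Set K} {c : K} (hc : 0 < c) (h : ∀ t, 0 ≤ t → t * c ∈ S) :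
    ¬ BddAbove S := by
  rintro ⟨b, hb⟩
  have hle : (|b| + 1) / c * c ≤ b := hb (h _ (by positivity))
  rw [div_mul_cancel₀ _ hc.ne'] at hle
  linarith [le_abs_self b]

lemma not_bddAbove_of_forall_mul_mem {K : Type*} [Field K] [LinearOrder K]
    [IsStrictOrderedRing K] {S : Set K} {c : K} (hc : c ≠ 0) (h : ∀ t, t * c ∈ S) :
    ¬ BddAbove S := by
  rcases hc.lt_or_gt with hneg | hpos
  · exact not_bddAbove_of_forall_nonneg_mul_mem (neg_pos.mpr hneg) fun t _ => by
      simpa only [neg_mul_comm] using h (-t)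
  · exact not_bddAbove_of_forall_nonneg_mul_mem hpos fun t _ => h t

lemma frobInner_zero {p q : ℕ} (M : Matrix (Fin p) (Fin q) ℝ) : frobInner M 0 = 0 := by
  rw [frobInner, Matrix.mul_zero, trace_zero]

lemma frobInner_smul {p q : ℕ} (M N : Matrix (Fin p) (Fin q) ℝ) (c : ℝ) :
    frobInner M (c • N) = c * frobInner M N := by
  rw [frobInner, Matrix.mul_smul, trace_smul, smul_eq_mul, frobInner]

lemma frobInner_vecMulVec {p q : ℕ} (M : Matrix (Fin p) (Fin q) ℝ) (u : Fin p → ℝ)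
    (w : Fin q → ℝ) : frobInner M (vecMulVec u w) = u ⬝ᵥ M *ᵥ w := by
  rw [frobInner, mul_vecMulVec, trace_vecMulVec, mulVec_transpose, dotProduct_mulVec]

lemma vecMulVec_mul_mul_transpose_vecMulVec {R ι ι' κ κ' : Type*} [CommSemiring R] [Fintype κ]
    [Fintype κ'] (u : ι → R) (w : κ → R) (M : Matrix κ κ' R) (x : ι' → R) (y : κ' → R) :
    vecMulVec u w * M * (vecMulVec x y)ᵀ = (w ⬝ᵥ M *ᵥ y) • vecMulVec u x := by
  rw [transpose_vecMulVec, vecMulVec_mul, vecMulVec_mul_vecMulVec, vecMulVec_smul,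
    dotProduct_mulVec]

/-- The set of values `X·A + Y·B + Z·C` of the objective over `(A, B, C) ∈ O_Λ`, whose supremum is
the support function of `O_Λ` at `(X, Y, Z)`. -/
def actionValues {n k m : ℕ} (Λ₁ : Matrix (Fin k) (Fin k) ℝ) (Λ₂ : Matrix (Fin m) (Fin m) ℝ)
    (X : Matrix (Fin n) (Fin n) ℝ) (Y : Matrix (Fin n) (Fin k) ℝ)
    (Z : Matrix (Fin n) (Fin m) ℝ) : Set ℝ :=
  {r : ℝ | ∃ p ∈ OLam n k m Λ₁ Λ₂,
    r = frobInner X p.1 + frobInner Y p.2.1 + frobInner Z p.2.2}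

namespace actionValues

variable {n k m : ℕ} {Λ₁ : Matrix (Fin k) (Fin k) ℝ} {Λ₂ : Matrix (Fin m) (Fin m) ℝ}
  {X : Matrix (Fin n) (Fin n) ℝ} {Y : Matrix (Fin n) (Fin k) ℝ} {Z : Matrix (Fin n) (Fin m) ℝ}

lemma subset_swap : actionValues Λ₁ Λ₂ X Y Z ⊆ actionValues Λ₂ Λ₁ X Z Y := by
  rintro _ ⟨⟨A, B, C⟩, ⟨hA, hABC⟩, rfl⟩
  exact ⟨(A, C, B), ⟨hA, by simpa only [add_right_comm] using hABC⟩, add_right_comm _ _ _⟩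

lemma dotProduct_mulVec_sub_mem (u : Fin n → ℝ) (w : Fin k → ℝ) {s : ℝ}
    (hs : w ⬝ᵥ (Λ₁ ^ 2) *ᵥ w ≤ 2 * s) :
    u ⬝ᵥ Y *ᵥ w - s * (u ⬝ᵥ X *ᵥ u) ∈ actionValues Λ₁ Λ₂ X Y Z := by
  have slack_nonneg : 0 ≤ s - 1 / 2 * (w ⬝ᵥ (Λ₁ ^ 2) *ᵥ w) := by linarith
  refine ⟨((-s) • vecMulVec u u, vecMulVec u w, 0), ⟨?_, ?_⟩, ?_⟩
  · exact IsSymm.smul (transpose_vecMulVec u u) (-s)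
  · convert (posSemidef_vecMulVec_self_star u).smul slack_nonneg using 1
    simp only [vecMulVec_mul_mul_transpose_vecMulVec, Matrix.zero_mul, smul_zero, add_zero,
      star_trivial]
    module
  · simp only [frobInner_smul, frobInner_vecMulVec, frobInner_zero]
    ring

lemma not_bddAbove_swap (h : ¬ BddAbove (actionValues Λ₂ Λ₁ X Z Y)) :
    ¬ BddAbove (actionValues Λ₁ Λ₂ X Y Z) :=
  fun hb => h (hb.mono subset_swap)

lemma not_bddAbove_of_not_posSemidef (hX : X.IsSymm) (h : ¬ X.PosSemidef) :
    ¬ BddAbove (actionValues Λ₁ Λ₂ X Y Z) := by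
  obtain ⟨v, hv⟩ := exists_dotProduct_mulVec_neg_of_not_posSemidef hX h
  refine not_bddAbove_of_forall_nonneg_mul_mem (neg_pos.mpr hv) fun t ht => ?_
  have hs : (0 : Fin k → ℝ) ⬝ᵥ (Λ₁ ^ 2) *ᵥ 0 ≤ 2 * t := by
    rw [zero_dotProduct]
    positivity
  simpa only [mulVec_zero, dotProduct_zero, zero_sub, mul_neg] using
    dotProduct_mulVec_sub_mem v 0 hs

lemma not_bddAbove_of_dotProduct_ne_zero {u : Fin n → ℝ} {w : Fin k → ℝ}
    (hquad : (w ⬝ᵥ (Λ₁ ^ 2) *ᵥ w) * (u ⬝ᵥ X *ᵥ u) = 0) (hne : u ⬝ᵥ Y *ᵥ w ≠ 0) :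
    ¬ BddAbove (actionValues Λ₁ Λ₂ X Y Z) := by
  refine not_bddAbove_of_forall_mul_mem hne fun t => ?_
  have hs : (t • w) ⬝ᵥ (Λ₁ ^ 2) *ᵥ (t • w) ≤ 2 * (t ^ 2 / 2 * (w ⬝ᵥ (Λ₁ ^ 2) *ᵥ w)) := by
    simp only [mulVec_smul, dotProduct_smul, smul_dotProduct, smul_eq_mul]
    exact le_of_eq (by ring)
  convert dotProduct_mulVec_sub_mem u (t • w) hs using 1
  rw [mul_assoc, hquad, mul_zero, sub_zero, mulVec_smul, dotProduct_smul, smul_eq_mul]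

lemma not_bddAbove_of_not_range_transpose_le
    (h : ¬ LinearMap.range (Yᵀ).mulVecLin ≤ LinearMap.range Λ₁.mulVecLin) :
    ¬ BddAbove (actionValues Λ₁ Λ₂ X Y Z) := by
  obtain ⟨w, u, hwΛ, hwu⟩ := exists_vecMul_eq_zero_of_not_range_le h
  have hquad : w ⬝ᵥ (Λ₁ ^ 2) *ᵥ w = 0 := by
    rw [pow_two, dotProduct_mulVec, ← vecMul_vecMul, hwΛ, zero_vecMul, zero_dotProduct]
  refine not_bddAbove_of_dotProduct_ne_zero (u := u) (w := w) (by rw [hquad, zero_mul]) ?_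
  rwa [dotProduct_mulVec, ← mulVec_transpose, dotProduct_comm]

lemma not_bddAbove_of_not_range_le
    (h : ¬ LinearMap.range Y.mulVecLin ≤ LinearMap.range X.mulVecLin) :
    ¬ BddAbove (actionValues Λ₁ Λ₂ X Y Z) := by
  obtain ⟨u, w, huX, huw⟩ := exists_vecMul_eq_zero_of_not_range_le h
  have hquad : u ⬝ᵥ X *ᵥ u = 0 := by rw [dotProduct_mulVec, huX, zero_dotProduct]
  exact not_bddAbove_of_dotProduct_ne_zero (by rw [hquad, mul_zero]) huw

end actionValues

theorem weighted_action_unbounded_general {n k m : ℕ}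
    {Λ₁ : Matrix (Fin k) (Fin k) ℝ} {Λ₂ : Matrix (Fin m) (Fin m) ℝ}
    {X : Matrix (Fin n) (Fin n) ℝ}
    {Y : Matrix (Fin n) (Fin k) ℝ} {Z : Matrix (Fin n) (Fin m) ℝ} (hX : X.IsSymm)
    (hbad : ¬ X.PosSemidef ∨
      ¬ LinearMap.range (Yᵀ).mulVecLin ≤ LinearMap.range Λ₁.mulVecLin ∨
      ¬ LinearMap.range (Zᵀ).mulVecLin ≤ LinearMap.range Λ₂.mulVecLin ∨
      ¬ (LinearMap.range Y.mulVecLin ≤ LinearMap.range X.mulVecLin ∧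
          LinearMap.range Z.mulVecLin ≤ LinearMap.range X.mulVecLin)) :
    ¬ BddAbove (actionValues Λ₁ Λ₂ X Y Z) := by
  rw [not_and_or] at hbad
  rcases hbad with hX' | hYΛ | hZΛ | hYX | hZX
  · exact actionValues.not_bddAbove_of_not_posSemidef hX hX'
  · exact actionValues.not_bddAbove_of_not_range_transpose_le hYΛ
  · exact actionValues.not_bddAbove_swap (actionValues.not_bddAbove_of_not_range_transpose_le hZΛ)
  · exact actionValues.not_bddAbove_of_not_range_le hYX
  · exact actionValues.not_bddAbove_swap (actionValues.not_bddAbove_of_not_range_le hZX)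

/-- If `X` fails to be positive semidefinite, or one of the range compatibility conditions
fails, then `{X·A + Y·B + Z·C : (A,B,C) ∈ O_Λ}` is not bounded above. -/
theorem weighted_action_unbounded (n k m : ℕ)
    (Λ₁ : Matrix (Fin k) (Fin k) ℝ) (Λ₂ : Matrix (Fin m) (Fin m) ℝ)
    (X : Matrix (Fin n) (Fin n) ℝ)
    (Y : Matrix (Fin n) (Fin k) ℝ) (Z : Matrix (Fin n) (Fin m) ℝ)
    (hΛ₁ : Λ₁.PosSemidef) (hΛ₂ : Λ₂.PosSemidef) (hX : X.IsSymm)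
    (hbad : ¬ X.PosSemidef ∨
      ¬ LinearMap.range (Yᵀ).mulVecLin ≤ LinearMap.range Λ₁.mulVecLin ∨
      ¬ LinearMap.range (Zᵀ).mulVecLin ≤ LinearMap.range Λ₂.mulVecLin ∨
      ¬ (LinearMap.range Y.mulVecLin ≤ LinearMap.range X.mulVecLin ∧
          LinearMap.range Z.mulVecLin ≤ LinearMap.range X.mulVecLin)) :
    ¬ BddAbove {r : ℝ | ∃ p ∈ OLam n k m Λ₁ Λ₂,
        r = frobInner X p.1 + frobInner Y p.2.1 + frobInner Z p.2.2} :=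
  weighted_action_unbounded_general hX hbad
end

section
/- Let A₀, A₁ be n×n real symmetric positive definite matrices that commute, and let Λ₂ be an n×n real symmetric positive definite matrix commuting with both A₀ and A₁. For t ∈ [0,1] the matrix C(t) := t·A₁ + (1−t)·A₀ is positive definite; define Ψ(t) := 2·C(t)⁻¹·(A₁ − A₀)·Λ₂⁻². Then for every t ∈ [0,1], the matrix-valued function Ψ has derivative Ψ′(t) = −(1/2)·Ψ(t)·Λ₂²·Ψ(t) at t (in the sense of HasDerivAt for functions from ℝ into the normed space of n×n matrices). -/
/-!
In a complete normed algebra, a curve `c` through units has `(c⁻¹)′ = −c⁻¹ c′ c⁻¹`. Hence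
`Ψ = a·c⁻¹ d w⁻¹` has derivative `−a·c⁻¹ d c⁻¹ d w⁻¹` at a point where `c′ = d`. Inserting
`w⁻¹ w = 1` between the two factors `c⁻¹ d` turns this into `−a⁻¹·Ψ w Ψ`. The segment from `A₀` to
`A₁` is such a curve, with `d = A₁ − A₀`, because the positive definite cone is convex.
-/

open Matrix

attribute [local instance] Matrix.normedAddCommGroup Matrix.normedSpace

open scoped Ring

section NormedAlgebra

variable {𝕜 R : Type*} [NontriviallyNormedField 𝕜] [NormedRing R] [HasSummableGeomSeries R]
  [NormedAlgebra 𝕜 R] {c : 𝕜 → R} {d : R} {t : 𝕜}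

theorem hasDerivAt_ringInverse (hc : HasDerivAt c d t) (ht : IsUnit (c t)) :
    HasDerivAt (fun s => (c s)⁻¹ʳ) (-((c t)⁻¹ʳ * d * (c t)⁻¹ʳ)) t := by
  obtain ⟨u, hu⟩ := ht
  have hinv := hasFDerivAt_ringInverse (𝕜 := 𝕜) u
  rw [hu] at hinv
  simpa [← hu] using! hinv.comp_hasDerivAt t hc

theorem hasDerivAt_riccati_ringInverse {a : 𝕜} {w : R} (hc : HasDerivAt c d t)
    (ht : IsUnit (c t)) (ha : a ≠ 0) (hw : IsUnit w) :
    HasDerivAt (fun s => a • ((c s)⁻¹ʳ * d * w⁻¹ʳ))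
      (-a⁻¹ • ((a • ((c t)⁻¹ʳ * d * w⁻¹ʳ)) * w * (a • ((c t)⁻¹ʳ * d * w⁻¹ʳ)))) t := by
  have hderiv : HasDerivAt (fun s => a • ((c s)⁻¹ʳ * d * w⁻¹ʳ))
      (a • (-((c t)⁻¹ʳ * d * (c t)⁻¹ʳ) * d * w⁻¹ʳ)) t :=
    (((hasDerivAt_ringInverse hc ht).mul_const d).mul_const w⁻¹ʳ).const_smul a
  have hcancel : (c t)⁻¹ʳ * d * w⁻¹ʳ * w * ((c t)⁻¹ʳ * d * w⁻¹ʳ) =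
      (c t)⁻¹ʳ * d * (c t)⁻¹ʳ * d * w⁻¹ʳ := by
    rw [Ring.inverse_mul_cancel_right _ _ hw]
    simp only [mul_assoc]
  refine hderiv.congr_deriv ?_
  simp only [smul_mul_assoc, mul_smul_comm, hcancel, smul_smul, neg_mul, neg_smul, smul_neg,
    inv_mul_cancel_left₀ ha]

end NormedAlgebra

theorem hasDerivAt_riccati_matrix_inv {𝕜 K n : Type*} [NontriviallyNormedField 𝕜] [NormedField K]
    [CompleteSpace K] [NormedAlgebra 𝕜 K] [Fintype n] [DecidableEq n] {C : 𝕜 → Matrix n n K}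
    {D W : Matrix n n K} {a t : 𝕜} (hC : HasDerivAt C D t) (ht : IsUnit (C t)) (ha : a ≠ 0)
    (hW : IsUnit W) :
    HasDerivAt (fun s => a • ((C s)⁻¹ * D * W⁻¹))
      (-a⁻¹ • ((a • ((C t)⁻¹ * D * W⁻¹)) * W * (a • ((C t)⁻¹ * D * W⁻¹)))) t := by
  -- The entrywise sup norm is not submultiplicative. Differentiability depends only on the
  -- topology, so it may be tested with the `ℓ∞` operator norm, which makes matrices a normed ring.
  let := Matrix.linftyOpNormedRing (n := n) (α := K)
  let := Matrix.linftyOpNormedAlgebra (n := n) (R := 𝕜) (α := K)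
  have : @CompleteSpace (Matrix n n K) PseudoMetricSpace.toUniformSpace :=
    inferInstanceAs (CompleteSpace (n → n → K))
  simpa only [nonsing_inv_eq_ringInverse] using! hasDerivAt_riccati_ringInverse hC ht ha hW

theorem convex_setOf_posDef {𝕜 R n : Type*} [CommSemiring 𝕜] [PartialOrder 𝕜] [StarRing 𝕜]
    [StarOrderedRing 𝕜] [Ring R] [PartialOrder R] [StarRing R] [AddLeftMono R] [Algebra 𝕜 R]
    [StarModule 𝕜 R] [PosSMulStrictMono 𝕜 R] : Convex 𝕜 {A : Matrix n n R | A.PosDef} :=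
  convex_iff_forall_pos.2 fun _ hA _ hB _ _ ha hb _ => (hA.smul ha).add (hB.smul hb)

open scoped ComplexOrder in
theorem geodesic_potential_riccati_general {K n : Type*} [RCLike K] [Fintype n] [DecidableEq n]
    {A₀ A₁ W : Matrix n n K} (hA₀ : A₀.PosDef) (hA₁ : A₁.PosDef) (hW : IsUnit W) {t : ℝ}
    (ht : t ∈ Set.Icc (0 : ℝ) 1) :
    (t • A₁ + (1 - t) • A₀).PosDef ∧
      HasDerivAt (fun s : ℝ => (2 : ℝ) • ((s • A₁ + (1 - s) • A₀)⁻¹ * (A₁ - A₀) * W⁻¹))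
        (-(1 / 2 : ℝ) •
          (((2 : ℝ) • ((t • A₁ + (1 - t) • A₀)⁻¹ * (A₁ - A₀) * W⁻¹)) * W *
            ((2 : ℝ) • ((t • A₁ + (1 - t) • A₀)⁻¹ * (A₁ - A₀) * W⁻¹))))
        t := by
  have hC : (t • A₁ + (1 - t) • A₀).PosDef :=
    convex_setOf_posDef hA₁ hA₀ ht.1 (sub_nonneg.2 ht.2) (add_sub_cancel t 1)
  have hderiv : HasDerivAt (fun s : ℝ => s • A₁ + (1 - s) • A₀) (A₁ - A₀) t := by
    refine AffineMap.hasDerivAt_lineMap.congr_of_eventuallyEq (.of_forall fun s => ?_)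
    rw [AffineMap.lineMap_apply_module, add_comm]
  refine ⟨hC, ?_⟩
  simpa only [one_div] using hasDerivAt_riccati_matrix_inv hderiv hC.isUnit two_ne_zero hW

/-- Along the linear interpolation `C(t) = t·A₁ + (1−t)·A₀` of commuting positive definite
matrices (all commuting with the positive definite weight `Λ₂`), the matrix field
`Ψ(t) = 2·C(t)⁻¹·(A₁ − A₀)·Λ₂⁻²` satisfies the Riccati-type ODE
`Ψ′(t) = −½·Ψ(t)·Λ₂²·Ψ(t)`, and `C(t)` is positive definite, for every `t ∈ [0,1]`. -/
theorem geodesic_potential_riccati (n : ℕ) (A₀ A₁ Λ₂ : Matrix (Fin n) (Fin n) ℝ)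
    (hA₀ : A₀.PosDef) (hA₁ : A₁.PosDef) (hΛ₂ : Λ₂.PosDef)
    (hcomm : A₀ * A₁ = A₁ * A₀)
    (hcomm₀ : Λ₂ * A₀ = A₀ * Λ₂) (hcomm₁ : Λ₂ * A₁ = A₁ * Λ₂) :
    ∀ t ∈ Set.Icc (0 : ℝ) 1,
      (t • A₁ + (1 - t) • A₀).PosDef ∧
      HasDerivAt
        (fun s : ℝ => (2 : ℝ) • ((s • A₁ + (1 - s) • A₀)⁻¹ * (A₁ - A₀) * (Λ₂ ^ 2)⁻¹))
        (-(1 / 2 : ℝ) •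
          (((2 : ℝ) • ((t • A₁ + (1 - t) • A₀)⁻¹ * (A₁ - A₀) * (Λ₂ ^ 2)⁻¹)) * Λ₂ ^ 2 *
            ((2 : ℝ) • ((t • A₁ + (1 - t) • A₀)⁻¹ * (A₁ - A₀) * (Λ₂ ^ 2)⁻¹))))
        t :=
  fun _ ht => geodesic_potential_riccati_general hA₀ hA₁ (hΛ₂.isUnit.pow 2) ht
end
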